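/- Let (T^-, T^+, σ) be a semi-standard linked tableaux pair for the generalized Kronecker quiver. Then f_{T^±} ≠ 0 and its leading monomial is Mon(T^+) = Mon(T^-). -/

import Mathlib

namespace QuiverSAGBI

/-- The variable `x^i_{jk}`: the `(j,k)` entry of the generic matrix `M_i`. -/
abbrev KVar (K r0 r1 : ℕ) := Fin K × Fin r1 × Fin r0

/-- The coordinate ring of the representation space of the generalized
Kronecker quiver with `K` arrows and dimension vector `(r0, r1)`. -/
abbrev KPoly (K r0 r1 : ℕ) := MvPolynomial (KVar K r0 r1) ℂ

/-- `x_v` is a greater variable than `x_w`:  `v.1 < w.1`, or `v.1 = w.1` and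
`v.2.1 < w.2.1`, or these agree and `v.2.2 < w.2.2`. -/
def VarGT {K r0 r1 : ℕ} (v w : KVar K r0 r1) : Prop :=
  v.1 < w.1 ∨ (v.1 = w.1 ∧ (v.2.1 < w.2.1 ∨ (v.2.1 = w.2.1 ∧ v.2.2 < w.2.2)))

/-- The monomial with exponent vector `a` is smaller than the one with exponent
vector `b` in the lexicographic term order: at the most significant variable
where they differ, `a` has the smaller exponent. -/
def MonLT {K r0 r1 : ℕ} (a b : KVar K r0 r1 →₀ ℕ) : Prop :=
  ∃ v, a v < b v ∧ ∀ w, VarGT w v → a w = b w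

/-- `mo` is the leading monomial (exponent vector) of `f`. -/
def IsLM {K r0 r1 : ℕ} (f : KPoly K r0 r1) (mo : KVar K r0 r1 →₀ ℕ) : Prop :=
  mo ∈ f.support ∧ ∀ m' ∈ f.support, m' = mo ∨ MonLT m' mo

/-- The substitution action of a pair of matrices `(g, h)` on the coordinate
ring: `x^i_{jk} ↦ ∑ (h⁻¹)_{j j'} x^i_{j'k'} g_{k' k}`, i.e. `M_i ↦ h⁻¹ M_i g`. -/
noncomputable def glAct {K r0 r1 : ℕ} (g : Matrix (Fin r0) (Fin r0) ℂ)
    (h : Matrix (Fin r1) (Fin r1) ℂ) : KPoly K r0 r1 →ₐ[ℂ] KPoly K r0 r1 :=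
  MvPolynomial.aeval fun v : KVar K r0 r1 =>
    ∑ j' : Fin r1, ∑ k' : Fin r0,
      MvPolynomial.C (h⁻¹ v.2.1 j' * g k' v.2.2) * MvPolynomial.X (v.1, j', k')

/-- `f` is a semi-invariant of weight `(w0, w1)`. -/
def IsSemiInvariant {K r0 r1 : ℕ} (f : KPoly K r0 r1) (w0 w1 : ℤ) : Prop :=
  ∀ (g : Matrix (Fin r0) (Fin r0) ℂ) (h : Matrix (Fin r1) (Fin r1) ℂ),
    IsUnit g.det → IsUnit h.det →
      glAct g h f = MvPolynomial.C (g.det ^ w0 * h.det ^ w1) * f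

/-- The semi-invariant ring: the linear span of all semi-invariants. -/
noncomputable def semiInvariantRing (K r0 r1 : ℕ) : Submodule ℂ (KPoly K r0 r1) :=
  Submodule.span ℂ {f | ∃ w0 w1 : ℤ, IsSemiInvariant f w0 w1}

/-- A linked tableaux pair for the generalized Kronecker quiver:
`Tm` is the tableau `T⁻` (with `r0` rows and `cm` columns, labels `(i,q)`),
`Tp` is the tableau `T⁺` (with `r1` rows and `cp` columns, labels `(i,p)`),
and `link` is a bijection of boxes sending the box labeled `(i,q)` in row `p`
of `T⁻` to a box labeled `(i,p)` lying in row `q` of `T⁺`. -/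
structure LinkedPair (K r0 r1 cm cp : ℕ) where
  Tm : Fin r0 → Fin cm → Fin K × Fin r1
  Tp : Fin r1 → Fin cp → Fin K × Fin r0
  link : Fin r0 × Fin cm ≃ Fin r1 × Fin cp
  link_row : ∀ p c, (link (p, c)).1 = (Tm p c).2
  link_label : ∀ p c, Tp (link (p, c)).1 (link (p, c)).2 = ((Tm p c).1, p)

/-- The exponent vector of `Mon(T⁺)`: a box labeled `(i,k)` in row `q` of `T⁺`
contributes the variable `x^i_{qk}`. -/
noncomputable def monExpP {K r0 r1 cm cp : ℕ} (L : LinkedPair K r0 r1 cm cp) :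
    KVar K r0 r1 →₀ ℕ :=
  ∑ q : Fin r1, ∑ c : Fin cp, Finsupp.single ((L.Tp q c).1, q, (L.Tp q c).2) 1

/-- The exponent vector of `Mon(T⁻)`: a box labeled `(i,j)` in row `p` of `T⁻`
contributes the variable `x^i_{jp}`. -/
noncomputable def monExpM {K r0 r1 cm cp : ℕ} (L : LinkedPair K r0 r1 cm cp) :
    KVar K r0 r1 →₀ ℕ :=
  ∑ p : Fin r0, ∑ c : Fin cm, Finsupp.single ((L.Tm p c).1, (L.Tm p c).2, p) 1

/-- The semi-invariant `f_{T^±}` attached to a linked tableaux pair: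
`∑_{α⁻, α⁺} sign(α⁻) sign(α⁺) Mon(α⁻ · α⁺ · T⁺)`, where `α⁺` permutes the
entries of each column of `T⁺` among its rows and `α⁻` permutes the second
entries of the labels of the boxes of `T⁺` linked to each column of `T⁻`. -/
noncomputable def pairPoly {K r0 r1 cm cp : ℕ} (L : LinkedPair K r0 r1 cm cp) :
    KPoly K r0 r1 :=
  ∑ αm : Fin cm → Equiv.Perm (Fin r0), ∑ αp : Fin cp → Equiv.Perm (Fin r1),
    ((∏ l, (Equiv.Perm.sign (αm l) : ℤ)) * ∏ c, (Equiv.Perm.sign (αp c) : ℤ)) •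
      ∏ p : Fin r0, ∏ l : Fin cm,
        MvPolynomial.X
          ((L.Tm p l).1, αp (L.link (p, l)).2 (L.link (p, l)).1, αm l p)

/-- The order on labels: `(i,p) ≤ (j,q)` iff `i < j`, or `i = j` and `p ≤ q`. -/
def LabelLE {K n : ℕ} (a b : Fin K × Fin n) : Prop :=
  a.1 < b.1 ∨ (a.1 = b.1 ∧ a.2 ≤ b.2)

/-- Strict version of the label order. -/
def LabelLT {K n : ℕ} (a b : Fin K × Fin n) : Prop :=
  a.1 < b.1 ∨ (a.1 = b.1 ∧ a.2 < b.2)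

/-- A rectangular tableau is semi-standard if its entries are weakly increasing
along each row and strictly increasing down each column. -/
def IsSemiStandardTab {rows cols K n : ℕ}
    (T : Fin rows → Fin cols → Fin K × Fin n) : Prop :=
  (∀ (i : Fin rows) (c c' : Fin cols), c ≤ c' → LabelLE (T i c) (T i c')) ∧
  (∀ (c : Fin cols) (i i' : Fin rows), i < i' → LabelLT (T i c) (T i' c))

/-- The link is semi-standard: boxes with equal labels in the same row of `T⁻`
are matched with their partners in `T⁺` in a left-to-right
order-preserving way. -/
def IsSemiStandardLink {K r0 r1 cm cp : ℕ}
    (L : LinkedPair K r0 r1 cm cp) : Prop :=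
  ∀ (p : Fin r0) (c c' : Fin cm), L.Tm p c = L.Tm p c' → c < c' →
    (L.link (p, c)).2 < (L.link (p, c')).2

/-- A semi-standard linked tableaux pair: both tableaux and the link are
semi-standard. -/
def IsSemiStandardPair {K r0 r1 cm cp : ℕ}
    (L : LinkedPair K r0 r1 cm cp) : Prop :=
  IsSemiStandardTab L.Tm ∧ IsSemiStandardTab L.Tp ∧ IsSemiStandardLink L

/-- A (nonempty) semi-standard linked tableaux pair is primitive if its leading
monomial is not the product of the leading monomials of two (nonempty)
semi-standard linked tableaux pairs. -/
def IsPrimitive {K r0 r1 cm cp : ℕ} (L : LinkedPair K r0 r1 cm cp) : Prop :=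
  IsSemiStandardPair L ∧ 0 < cm ∧
    ¬∃ (cm1 cp1 cm2 cp2 : ℕ) (L1 : LinkedPair K r0 r1 cm1 cp1)
        (L2 : LinkedPair K r0 r1 cm2 cp2) (m m1 m2 : KVar K r0 r1 →₀ ℕ),
        0 < cm1 ∧ 0 < cm2 ∧ IsSemiStandardPair L1 ∧ IsSemiStandardPair L2 ∧
        IsLM (pairPoly L) m ∧ IsLM (pairPoly L1) m1 ∧ IsLM (pairPoly L2) m2 ∧
        m = m1 + m2

/-!
Identify the boxes of `T⁺` and `T⁻` through the link. A box `e` then has a color `i`, a row `q` in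
`T⁺` and a row `p` in `T⁻`, and it contributes the variable `x^i_{qp}`. A term of `f_{T^±}` is given
by box permutations `f` and `g` preserving the columns of `T⁺` and of `T⁻` respectively; in it, the
box contributes the variable with its own color, the `T⁺`-row of `f e` and the `T⁻`-row of `g e`.

Given a color `j` and cutoffs `q₀`, `p₀`, count the boxes of color `j` with `q ≤ q₀` and `p ≤ p₀`.
Inside a color, the entries of a column grow at least as fast as the row index. Comparing the
entry in row `q₀` of the `T⁺`-column of a box with `(j, p₀)`, and the entry in row `p₀` of its
`T⁻`-column with `(j, q₀)`, therefore splits the count into one that only sees `T⁺`, one that only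
sees `T⁻`, and one that only sees columns. As long as smaller colors stay in place, no column
permutation can increase the first two, while for the moved boxes the three of them bound the
count from above: the count cannot increase. At the first variable where a term differs from
`Mon(T⁺)`, take `j`, `q₀`, `p₀` to be its indices; every other variable counted is greater, so
occurs equally often in both, and the exponent in the term is the smaller one.

If a term has the exponents of `Mon(T⁺)`, equality in these bounds shows that `f e` and `g e` have
the same color and rows. The order condition on the link then yields `f = g`, column by column of
`T⁻`. Such a term has sign `1`, and nothing cancels.
-/

section Permutations

open Finset Equiv

theorem card_filter_comp_perm_le_of_nested {E C : Type*} [Fintype E] {c : E → C} {f : Perm E}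
    (hf : ∀ e, c (f e) = c e) {U R : E → Prop} [DecidablePred U] [DecidablePred R]
    (hUR : ∀ x y, c x = c y → U x → R y → R x ∨ U y) :
    #{e | U e ∧ R (f e)} ≤ #{e | U e ∧ R e} ∧
      (#{e | U e ∧ R (f e)} = #{e | U e ∧ R e} →
        ∀ e, (∀ y, c y = c e → R y → U y) → R (f e) → U e) := by
  classical
  -- On a class with `R ⊆ U` the right-hand side counts `R`, which `f` permutes; on any other class
  -- nestedness gives `U ⊆ R`, so it counts `U`.
  let G (e : E) : Prop := ∀ y, c y = c e → R y → U y
  have hG (e : E) : G (f e) ↔ G e := by simp only [G, hf]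
  have hle : ∀ e ∈ univ, (if U e ∧ R (f e) then 1 else 0) ≤
      (if G (f e) ∧ R (f e) then 1 else 0) + if ¬ G e ∧ U e then 1 else 0 := by
    intro e _
    have := hG e
    grind
  have hsplit : #{e | U e ∧ R e} =
      ∑ e, ((if G (f e) ∧ R (f e) then 1 else 0) + if ¬ G e ∧ U e then 1 else 0) := by
    rw [sum_add_distrib, Equiv.sum_comp f fun e => if G e ∧ R e then 1 else 0,
      ← sum_add_distrib, card_filter]
    refine sum_congr rfl fun e _ => ?_
    by_cases he : G e
    · have : R e → U e := he e rfl
      grind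
    · obtain ⟨y, hy, hRy, hUy⟩ : ∃ y, c y = c e ∧ R y ∧ ¬ U y := by
        simpa only [G, not_forall, exists_prop] using he
      have := hUR e y hy.symm
      grind
  rw [hsplit, card_filter]
  refine ⟨sum_le_sum hle, fun heq e hGe hR => ?_⟩
  have heq_e := (sum_eq_sum_iff_of_le hle).1 heq e (mem_univ e)
  have hGe : G e := hGe
  have := (hG e).2 hGe
  grind

theorem comp_perm_eq_of_le {E ι : Type*} [Finite E] [PartialOrder ι] {u : E → ι}
    {f g : Perm E} (h : ∀ e, u (f e) ≤ u (g e)) (e : E) : u (f e) = u (g e) := by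
  refine (h e).antisymm ?_
  let σ : Perm E := g * f⁻¹
  have hstep (x : E) : u x ≤ u (σ x) := by simpa [σ] using h (f⁻¹ x)
  have hpow (k : ℕ) (x : E) : u x ≤ u ((σ ^ k) x) := by
    induction k with
    | zero => exact le_rfl
    | succ k ih => exact ih.trans (by simpa only [pow_succ', Perm.mul_apply] using hstep _)
  have hcycle : σ ^ (orderOf σ - 1) * σ = 1 := by
    rw [pow_sub_one_mul (orderOf_pos σ).ne', pow_orderOf_eq_one]
  calc u (g e) = u (σ (f e)) := by simp [σ]
    _ ≤ u ((σ ^ (orderOf σ - 1) * σ) (f e)) := hpow _ _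
    _ = u (f e) := by rw [hcycle, Perm.one_apply]

-- This is `s - r ≤ (T s).2 - (T r).2`, with both sides moved to avoid truncated subtraction.
theorem add_snd_le_add_snd_of_strictMono {ι : Type*} [LinearOrder ι] {m n : ℕ}
    {T : Fin m → ι ×ₗ Fin n} (hT : StrictMono T) {r s : Fin m}
    (hrs : r ≤ s) (hfst : (ofLex (T r)).1 = (ofLex (T s)).1) :
    (s : ℕ) + (ofLex (T r)).2 ≤ r + (ofLex (T s)).2 := by
  have hconst : ∀ t ∈ Icc r s, (ofLex (T t)).1 = (ofLex (T r)).1 := by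
    intro t ht
    rw [mem_Icc] at ht
    exact le_antisymm (hfst ▸ Prod.Lex.monotone_fst _ _ (hT.monotone ht.2))
      (Prod.Lex.monotone_fst _ _ (hT.monotone ht.1))
  have hmono : StrictMonoOn (fun t => (ofLex (T t)).2) (Icc r s) := by
    intro t ht u hu htu
    rcases Prod.Lex.lt_iff.1 (hT htu) with hlt | ⟨-, hlt⟩
    · exact absurd hlt (by rw [hconst t ht, hconst u hu]; exact lt_irrefl _)
    · exact hlt
  have hcard : #(Icc r s) ≤ #(Icc (ofLex (T r)).2 (ofLex (T s)).2) := by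
    refine card_le_card_of_injOn _ (fun t ht => ?_) hmono.injOn
    have ht' := mem_Icc.1 ht
    exact mem_coe.2 <| mem_Icc.2 ⟨hmono.monotoneOn (left_mem_Icc.2 hrs) ht ht'.1,
      hmono.monotoneOn ht (right_mem_Icc.2 hrs) ht'.2⟩
  have hrs' : (r : ℕ) ≤ s := hrs
  rw [Fin.card_Icc, Fin.card_Icc] at hcard
  omega

end Permutations

section Corner

open Finset Equiv

variable {E ι C D : Type*} {m n : ℕ}

/-- The boxes in `E` are colored by `i` and placed at (row, column) positions of two tableaux by
`α` and `β`. This is the label in row `r` and column `c` of the first tableau: the color of that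
box and its row in the second tableau, in the lexicographic label order. -/
def entry (i : E → ι) (α : E ≃ Fin m × C) (β : E ≃ Fin n × D) (r : Fin m) (c : C) :
    ι ×ₗ Fin n :=
  toLex (i (α.symm (r, c)), (β (α.symm (r, c))).1)

/-- The labels of the first tableau increase strictly down each column. -/
def ColumnStrict [Preorder ι] (i : E → ι) (α : E ≃ Fin m × C) (β : E ≃ Fin n × D) : Prop :=
  ∀ c, StrictMono fun r => entry i α β r c

theorem entry_row_col (i : E → ι) (α : E ≃ Fin m × C) (β : E ≃ Fin n × D) (e : E) :
    entry i α β (α e).1 (α e).2 = toLex (i e, (β e).1) := by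
  simp [entry]

variable [LinearOrder ι] {i : E → ι} {α : E ≃ Fin m × C} {β : E ≃ Fin n × D}

theorem ColumnStrict.color_le (hα : ColumnStrict i α β) {e e' : E}
    (hcol : (α e).2 = (α e').2) (hrow : (α e).1 ≤ (α e').1) : i e ≤ i e' := by
  have hle := (hα (α e).2).monotone hrow
  rw [entry_row_col, hcol, entry_row_col] at hle
  exact Prod.Lex.monotone_fst _ _ hle

theorem ColumnStrict.lt_entry (hα : ColumnStrict i α β) {e : E} {q₀ : Fin m} {p₀ : Fin n}
    (hq : (α e).1 ≤ q₀) (hp : p₀ < (β e).1) :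
    toLex (i e, p₀) < entry i α β q₀ (α e).2 :=
  calc toLex (i e, p₀) < toLex (i e, (β e).1) := Prod.Lex.toLex_lt_toLex.2 (.inr ⟨rfl, hp⟩)
    _ = entry i α β (α e).1 (α e).2 := (entry_row_col i α β e).symm
    _ ≤ entry i α β q₀ (α e).2 := (hα _).monotone hq

theorem ColumnStrict.entry_lt (hα : ColumnStrict i α β) {e : E} {q₀ : Fin m} {p₀ : Fin n}
    (hq : q₀ < (α e).1) (hp : (β e).1 ≤ p₀) :
    entry i α β q₀ (α e).2 < toLex (i e, p₀) :=
  calc entry i α β q₀ (α e).2 < entry i α β (α e).1 (α e).2 := hα _ hq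
    _ = toLex (i e, (β e).1) := entry_row_col i α β e
    _ ≤ toLex (i e, p₀) := Prod.Lex.toLex_le_toLex.2 (.inr ⟨rfl, hp⟩)

theorem ColumnStrict.exists_entry_below (hα : ColumnStrict i α β) {e : E} {q₀ : Fin m}
    {p₀ : Fin n} (hq : (α e).1 ≤ q₀) (hle : entry i α β q₀ (α e).2 ≤ toLex (i e, p₀)) :
    ∃ p₁, entry i α β q₀ (α e).2 = toLex (i e, p₁) ∧ (q₀ : ℕ) + (β e).1 ≤ (α e).1 + p₁ := by
  have hrow : toLex (i e, (β e).1) ≤ entry i α β q₀ (α e).2 :=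
    entry_row_col i α β e ▸ (hα _).monotone hq
  have hcolor : i e = (ofLex (entry i α β q₀ (α e).2)).1 :=
    le_antisymm (Prod.Lex.monotone_fst _ _ hrow) (Prod.Lex.monotone_fst _ _ hle)
  have hslope := add_snd_le_add_snd_of_strictMono (hα (α e).2) hq
    (by rw [entry_row_col]; exact hcolor)
  rw [entry_row_col] at hslope
  exact ⟨(ofLex (entry i α β q₀ (α e).2)).2, ofLex_inj.1 (Prod.ext hcolor.symm rfl), hslope⟩

theorem ColumnStrict.exists_entry_above (hα : ColumnStrict i α β) {e : E} {q₀ : Fin m}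
    {p₀ : Fin n} (hq : q₀ ≤ (α e).1) (hle : toLex (i e, p₀) ≤ entry i α β q₀ (α e).2) :
    ∃ p₁, entry i α β q₀ (α e).2 = toLex (i e, p₁) ∧ (α e).1 + (p₁ : ℕ) ≤ q₀ + (β e).1 := by
  have hrow : entry i α β q₀ (α e).2 ≤ toLex (i e, (β e).1) :=
    entry_row_col i α β e ▸ (hα _).monotone hq
  have hcolor : (ofLex (entry i α β q₀ (α e).2)).1 = i e :=
    le_antisymm (Prod.Lex.monotone_fst _ _ hrow) (Prod.Lex.monotone_fst _ _ hle)
  have hslope := add_snd_le_add_snd_of_strictMono (hα (α e).2) hq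
    (by rw [entry_row_col]; exact hcolor)
  rw [entry_row_col] at hslope
  exact ⟨(ofLex (entry i α β q₀ (α e).2)).2, ofLex_inj.1 (Prod.ext hcolor rfl), hslope⟩

theorem not_entry_le_and_entry_lt (hα : ColumnStrict i α β) (hβ : ColumnStrict i β α) {e : E}
    {q₀ : Fin m} {p₀ : Fin n} (hq : (α e).1 ≤ q₀) (hp : (β e).1 ≤ p₀) :
    ¬ (entry i α β q₀ (α e).2 ≤ toLex (i e, p₀) ∧
      entry i β α p₀ (β e).2 < toLex (i e, q₀)) := by
  rintro ⟨hA, hB⟩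
  obtain ⟨p₁, hp₁, hα_slope⟩ := hα.exists_entry_below hq hA
  obtain ⟨q₁, hq₁, hβ_slope⟩ := hβ.exists_entry_below hp hB.le
  have hp₁_le : p₁ ≤ p₀ := by simpa [hp₁, Prod.Lex.toLex_le_toLex] using hA
  have hq₁_lt : q₁ < q₀ := by simpa [hq₁, Prod.Lex.toLex_lt_toLex] using hB
  omega

theorem entry_le_or_entry_lt (hα : ColumnStrict i α β) (hβ : ColumnStrict i β α) {e : E}
    {q₀ : Fin m} {p₀ : Fin n} (hq : q₀ < (α e).1) (hp : p₀ < (β e).1) :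
    entry i α β q₀ (α e).2 ≤ toLex (i e, p₀) ∨
      entry i β α p₀ (β e).2 < toLex (i e, q₀) := by
  by_contra! h
  obtain ⟨hA, hB⟩ := h
  obtain ⟨p₁, hp₁, hα_slope⟩ := hα.exists_entry_above hq.le hA.le
  obtain ⟨q₁, hq₁, hβ_slope⟩ := hβ.exists_entry_above hp.le hB
  have hp₁_gt : p₀ < p₁ := by simpa [hp₁, Prod.Lex.toLex_lt_toLex] using hA
  have hq₁_ge : q₀ ≤ q₁ := by simpa [hq₁, Prod.Lex.toLex_le_toLex] using hB
  omega

-- Once the columns of `e` are fixed, the first summand depends only on the row of `e` in the first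
-- tableau, the second only on its row in the other one, and the third on neither.
theorem corner_indicator_eq (hα : ColumnStrict i α β) (hβ : ColumnStrict i β α) (e : E)
    (q₀ : Fin m) (p₀ : Fin n) :
    (if (α e).1 ≤ q₀ ∧ (β e).1 ≤ p₀ then 1 else 0) =
      (if (α e).1 ≤ q₀ ∧ entry i α β q₀ (α e).2 ≤ toLex (i e, p₀) then 1 else 0) +
      (if (β e).1 ≤ p₀ ∧ entry i β α p₀ (β e).2 < toLex (i e, q₀) then 1 else 0) +
      if ¬ entry i α β q₀ (α e).2 ≤ toLex (i e, p₀) ∧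
        ¬ entry i β α p₀ (β e).2 < toLex (i e, q₀) then 1 else 0 := by
  rcases le_or_gt (α e).1 q₀ with hq | hq <;> rcases le_or_gt (β e).1 p₀ with hp | hp
  · have := not_entry_le_and_entry_lt hα hβ hq hp
    grind
  · have hA := (hα.lt_entry hq hp).not_ge
    have hB := hβ.entry_lt hp hq
    simp [hA, hB, hp.not_ge]
  · have hA := (hα.entry_lt hq hp).le
    have hB := (hβ.lt_entry hp hq).not_gt
    simp [hA, hB, hq.not_ge]
  · have := entry_le_or_entry_lt hα hβ hq hp
    grind

end Corner

section Dominance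

open Finset Equiv

variable {E ι C D : Type*} [Fintype E] [LinearOrder ι] {m n : ℕ} {i : E → ι}
  {α : E ≃ Fin m × C} {β : E ≃ Fin n × D} {f g : Perm E}

theorem ColumnStrict.color_lt_of_card_eq (hα : ColumnStrict i α β)
    (hf : ∀ e, (α (f e)).2 = (α e).2) {j : ι}
    (hcard : ∀ q₀, #{e | i e < j ∧ (α (f e)).1 ≤ q₀} = #{e | i e < j ∧ (α e).1 ≤ q₀}) {e : E}
    (hlt : i (f e) < j) : i e < j := by
  refine (card_filter_comp_perm_le_of_nested (c := fun e => (α e).2) hf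
    (U := fun e => i e < j) (R := fun y => (α y).1 ≤ (α (f e)).1) fun x y hxy hx hy => ?_).2
    (hcard _) e (fun y hy hrow => ?_) le_rfl
  · rcases le_total (α x).1 (α y).1 with hle | hle
    · exact .inl (hle.trans hy)
    · exact .inr ((hα.color_le hxy.symm hle).trans_lt hx)
  · exact (hα.color_le (hy.trans (hf e).symm) hrow).trans_lt hlt

theorem ColumnStrict.card_row_comp_le (hα : ColumnStrict i α β)
    (hf : ∀ e, (α (f e)).2 = (α e).2) {j : ι} (hfj : ∀ e, i (f e) < j → i e < j)
    (q₀ : Fin m) (A : C → Prop) [DecidablePred A] :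
    #{e | i e = j ∧ (α (f e)).1 ≤ q₀ ∧ A (α e).2} ≤
      #{e | i e = j ∧ (α e).1 ≤ q₀ ∧ A (α e).2} := by
  have hnested := (card_filter_comp_perm_le_of_nested (c := fun e => (α e).2) hf
    (U := fun e => i e = j ∧ A (α e).2) (R := fun e => j ≤ i e ∧ (α e).1 ≤ q₀)
    fun x y hxy hx hy => ?_).1
  · convert hnested using 3 with e _ e _
    · have := hfj e
      grind
    · grind
  · rcases le_total (α x).1 (α y).1 with hle | hle
    · exact .inl ⟨hx.1.ge, hle.trans hy.2⟩
    · have := hα.color_le hxy.symm hle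
      exact .inr ⟨(this.trans_eq hx.1).antisymm hy.1, hxy ▸ hx.2⟩

theorem card_corner_eq (hα : ColumnStrict i α β) (hβ : ColumnStrict i β α) (j : ι)
    (q₀ : Fin m) (p₀ : Fin n) :
    #{e | i e = j ∧ (α e).1 ≤ q₀ ∧ (β e).1 ≤ p₀} =
      #{e | i e = j ∧ (α e).1 ≤ q₀ ∧ entry i α β q₀ (α e).2 ≤ toLex (j, p₀)} +
      #{e | i e = j ∧ (β e).1 ≤ p₀ ∧ entry i β α p₀ (β e).2 < toLex (j, q₀)} +
      #{e | i e = j ∧ ¬ entry i α β q₀ (α e).2 ≤ toLex (j, p₀) ∧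
        ¬ entry i β α p₀ (β e).2 < toLex (j, q₀)} := by
  simp only [card_filter, ← sum_add_distrib]
  refine sum_congr rfl fun e _ => ?_
  by_cases he : i e = j
  · subst he
    simpa only [true_and] using corner_indicator_eq hα hβ e q₀ p₀
  · simp only [he, false_and, if_false]

theorem card_corner_comp_le (hα : ColumnStrict i α β) (hβ : ColumnStrict i β α)
    (hf : ∀ e, (α (f e)).2 = (α e).2) (hg : ∀ e, (β (g e)).2 = (β e).2) {j : ι}
    (hfj : ∀ e, i (f e) < j → i e < j) (hgj : ∀ e, i (g e) < j → i e < j)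
    (q₀ : Fin m) (p₀ : Fin n) :
    #{e | i e = j ∧ (α (f e)).1 ≤ q₀ ∧ (β (g e)).1 ≤ p₀} ≤
        #{e | i e = j ∧ (α e).1 ≤ q₀ ∧ (β e).1 ≤ p₀} ∧
      (#{e | i e = j ∧ (α (f e)).1 ≤ q₀ ∧ (β (g e)).1 ≤ p₀} =
          #{e | i e = j ∧ (α e).1 ≤ q₀ ∧ (β e).1 ≤ p₀} →
        ∀ e, i e = j → (α (f e)).1 ≤ q₀ → entry i α β q₀ (α e).2 ≤ toLex (j, p₀) →
          (β (g e)).1 ≤ p₀) := by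
  let A (c : C) : Prop := entry i α β q₀ c ≤ toLex (j, p₀)
  let B (d : D) : Prop := entry i β α p₀ d < toLex (j, q₀)
  have hpoint : ∀ e ∈ univ, (if i e = j ∧ (α (f e)).1 ≤ q₀ ∧ (β (g e)).1 ≤ p₀ then 1 else 0) ≤
      (if i e = j ∧ (α (f e)).1 ≤ q₀ ∧ A (α e).2 then 1 else 0) +
      (if i e = j ∧ (β (g e)).1 ≤ p₀ ∧ B (β e).2 then 1 else 0) +
      if i e = j ∧ ¬ A (α e).2 ∧ ¬ B (β e).2 then 1 else 0 := by
    intro e _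
    grind
  have hsum_le : ∑ e, ((if i e = j ∧ (α (f e)).1 ≤ q₀ ∧ A (α e).2 then 1 else 0) +
      (if i e = j ∧ (β (g e)).1 ≤ p₀ ∧ B (β e).2 then 1 else 0) +
      if i e = j ∧ ¬ A (α e).2 ∧ ¬ B (β e).2 then 1 else 0) ≤
      #{e | i e = j ∧ (α e).1 ≤ q₀ ∧ (β e).1 ≤ p₀} := by
    rw [card_corner_eq hα hβ, sum_add_distrib, sum_add_distrib, ← card_filter, ← card_filter,
      ← card_filter]
    gcongr ?_ + ?_ + _
    · exact hα.card_row_comp_le hf hfj q₀ A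
    · exact hβ.card_row_comp_le hg hgj p₀ B
  refine ⟨(card_filter _ _).trans_le ((sum_le_sum hpoint).trans hsum_le),
    fun heq e he hq hA => ?_⟩
  rw [card_filter] at heq
  have heq_e := (sum_eq_sum_iff_of_le hpoint).1
    ((sum_le_sum hpoint).antisymm (hsum_le.trans_eq heq.symm)) e (mem_univ e)
  have : A (α e).2 := hA
  grind

theorem row_eq_of_card_corner_eq (hα : ColumnStrict i α β) (hβ : ColumnStrict i β α)
    (hf : ∀ e, (α (f e)).2 = (α e).2) (hg : ∀ e, (β (g e)).2 = (β e).2)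
    (hif : ∀ e, i (f e) = i e) (hig : ∀ e, i (g e) = i e)
    (hcard : ∀ j q₀ p₀, #{e | i e = j ∧ (α (f e)).1 ≤ q₀ ∧ (β (g e)).1 ≤ p₀} =
      #{e | i e = j ∧ (α e).1 ≤ q₀ ∧ (β e).1 ≤ p₀}) (e : E) :
    (β (g e)).1 = (β (f e)).1 := by
  refine comp_perm_eq_of_le (u := fun e => (β e).1) (fun e => ?_) e
  refine (card_corner_comp_le hα hβ hf hg (fun e => (hif e).ge.trans_lt)
    (fun e => (hig e).ge.trans_lt) _ _).2 (hcard (i e) (α (f e)).1 (β (f e)).1) e rfl le_rfl ?_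
  rw [← hf e, entry_row_col, hif]

end Dominance

section Rearrangement

open Finset Equiv

theorem perm_eq_of_row_eq {E ι : Type*} [Finite E] {m n cp cm : ℕ} {i : E → ι}
    {f g : Perm E} {α : E ≃ Fin m × Fin cp} {β : E ≃ Fin n × Fin cm}
    (hlink : ∀ e e', i e = i e' → (α e).1 = (α e').1 → (β e).1 = (β e').1 →
      (β e).2 < (β e').2 → (α e).2 < (α e').2)
    (hf : ∀ e, (α (f e)).2 = (α e).2) (hg : ∀ e, (β (g e)).2 = (β e).2)
    (hi : ∀ e, i (g e) = i (f e)) (hα_row : ∀ e, (α (g e)).1 = (α (f e)).1)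
    (hβ_row : ∀ e, (β (g e)).1 = (β (f e)).1) : f = g := by
  cases nonempty_fintype E
  suffices h : ∀ l₀, ∀ e, (β e).2 = l₀ → f e = g e from Equiv.ext fun e => h _ e rfl
  intro l₀
  induction l₀ using WellFoundedLT.induction with
  | ind l₀ ih =>
  have hmoves_right : ∀ e, (β e).2 = l₀ → f e = g e ∨ (α (g e)).2 < (α e).2 := by
    intro e he
    rcases lt_trichotomy (β (f e)).2 (β (g e)).2 with hlt | heq | hgt
    · have hcol : (β (g.symm (f e))).2 = (β (f e)).2 := by rw [← hg, apply_symm_apply]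
      have hfix := ih _ (hcol.trans_lt (hlt.trans_eq ((hg e).trans he))) _ rfl
      rw [apply_symm_apply, f.injective.eq_iff, symm_apply_eq] at hfix
      exact .inl hfix
    · exact .inl (β.injective (Prod.ext (hβ_row e).symm heq))
    · exact .inr (hf e ▸ hlink _ _ (hi e) (hα_row e) (hβ_row e) hgt)
  have hle : ∀ e ∈ univ.filter (fun e => (β e).2 = l₀), ((α (g e)).2 : ℕ) ≤ (α e).2 := by
    intro e he
    rcases hmoves_right e (mem_filter.1 he).2 with heq | hlt
    · rw [← heq, hf]
    · exact hlt.le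
  have hsum : ∑ e with (β e).2 = l₀, ((α (g e)).2 : ℕ) = ∑ e with (β e).2 = l₀, ((α e).2 : ℕ) :=
    sum_equiv g (fun e => by simp only [mem_filter_univ, hg]) fun _ _ => rfl
  intro e he
  have heq := (sum_eq_sum_iff_of_le hle).1 hsum e (mem_filter_univ e |>.2 he)
  exact (hmoves_right e he).resolve_right fun hlt => hlt.ne (Fin.ext heq)

end Rearrangement

section ExponentVectors

open Finset Equiv

variable {E W : Type*} [Fintype E]

/-- The exponent vector of the monomial `∏ e, x_{V e}`. -/
noncomputable def expVec (V : E → W) : W →₀ ℕ :=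
  ∑ e, Finsupp.single (V e) 1

theorem expVec_apply [DecidableEq W] (V : E → W) (w : W) : expVec V w = #{e | V e = w} := by
  simp only [expVec, Finsupp.finsetSum_apply, Finsupp.single_apply, card_filter]

theorem card_filter_eq_sum_expVec [Fintype W] (V : E → W) (P : W → Prop) [DecidablePred P] :
    #{e | P (V e)} = ∑ w with P w, expVec V w := by
  classical
  rw [card_eq_sum_card_fiberwise (f := V) (t := univ.filter P) fun e he => by simpa using he]
  refine sum_congr rfl fun w hw => ?_
  rw [expVec_apply, filter_filter]
  congr 1 with e
  have := (mem_filter.1 hw).2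
  grind

theorem card_filter_congr_of_expVec [Finite W] {V V' : E → W} {P : W → Prop} [DecidablePred P]
    (h : ∀ w, P w → expVec V w = expVec V' w) : #{e | P (V e)} = #{e | P (V' e)} := by
  cases nonempty_fintype W
  rw [card_filter_eq_sum_expVec, card_filter_eq_sum_expVec]
  exact sum_congr rfl fun w hw => h w (mem_filter.1 hw).2

variable {ι C D : Type*} {m n : ℕ}

/-- The variable contributed by the box `e` after `f` has moved it in the first tableau and `g` in
the second: its color and its two new rows. -/
def movedVar (i : E → ι) (α : E ≃ Fin m × C) (β : E ≃ Fin n × D) (f g : Perm E) (e : E) :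
    ι × Fin m × Fin n :=
  (i e, (α (f e)).1, (β (g e)).1)

variable [Finite ι] [LinearOrder ι] {i : E → ι} {α : E ≃ Fin m × C} {β : E ≃ Fin n × D}
  {f g : Perm E}

theorem color_lt_of_expVec_eq (hα : ColumnStrict i α β) (hβ : ColumnStrict i β α)
    (hf : ∀ e, (α (f e)).2 = (α e).2) (hg : ∀ e, (β (g e)).2 = (β e).2) {j : ι}
    (h : ∀ w : ι × Fin m × Fin n, w.1 < j →
      expVec (movedVar i α β f g) w = expVec (movedVar i α β 1 1) w) :
    (∀ e, i (f e) < j → i e < j) ∧ ∀ e, i (g e) < j → i e < j :=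
  ⟨fun _ => hα.color_lt_of_card_eq hf fun q₀ => card_filter_congr_of_expVec
      (P := fun w : ι × Fin m × Fin n => w.1 < j ∧ w.2.1 ≤ q₀) fun w hw => h w hw.1,
    fun _ => hβ.color_lt_of_card_eq hg fun p₀ => card_filter_congr_of_expVec
      (P := fun w : ι × Fin m × Fin n => w.1 < j ∧ w.2.2 ≤ p₀) fun w hw => h w hw.1⟩

theorem row_eq_of_expVec_eq (hα : ColumnStrict i α β) (hβ : ColumnStrict i β α)
    (hf : ∀ e, (α (f e)).2 = (α e).2) (hg : ∀ e, (β (g e)).2 = (β e).2)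
    (h : expVec (movedVar i α β f g) = expVec (movedVar i α β 1 1)) (e : E) :
    i (g e) = i (f e) ∧ (α (g e)).1 = (α (f e)).1 ∧ (β (g e)).1 = (β (f e)).1 := by
  have hcolor (j : ι) := color_lt_of_expVec_eq (j := j) hα hβ hf hg fun w _ => by rw [h]
  have hif (e : E) : i (f e) = i e := (comp_perm_eq_of_le (f := 1) (u := i)
    (fun e => not_lt.1 fun hlt => lt_irrefl _ ((hcolor (i e)).1 e hlt)) e).symm
  have hig (e : E) : i (g e) = i e := (comp_perm_eq_of_le (f := 1) (u := i)
    (fun e => not_lt.1 fun hlt => lt_irrefl _ ((hcolor (i e)).2 e hlt)) e).symm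
  have hcard (j : ι) (q₀ : Fin m) (p₀ : Fin n) :
      #{e | i e = j ∧ (α (f e)).1 ≤ q₀ ∧ (β (g e)).1 ≤ p₀} =
        #{e | i e = j ∧ (α e).1 ≤ q₀ ∧ (β e).1 ≤ p₀} :=
    card_filter_congr_of_expVec (V' := movedVar i α β 1 1)
      (P := fun w : ι × Fin m × Fin n => w.1 = j ∧ w.2.1 ≤ q₀ ∧ w.2.2 ≤ p₀) fun w _ => by rw [h]
  refine ⟨(hig e).trans (hif e).symm, ?_, row_eq_of_card_corner_eq hα hβ hf hg hif hig hcard e⟩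
  refine (row_eq_of_card_corner_eq hβ hα hg hf hig hif (fun j p₀ q₀ => ?_) e).symm
  simpa only [and_comm (a := (β _).1 ≤ p₀)] using hcard j q₀ p₀

variable {K r0 r1 : ℕ} {i : E → Fin K} {α : E ≃ Fin r1 × C} {β : E ≃ Fin r0 × D}

theorem expVec_movedVar_le (hα : ColumnStrict i α β) (hβ : ColumnStrict i β α)
    (hf : ∀ e, (α (f e)).2 = (α e).2) (hg : ∀ e, (β (g e)).2 = (β e).2) {v : KVar K r0 r1}
    (h : ∀ w, VarGT w v → expVec (movedVar i α β f g) w = expVec (movedVar i α β 1 1) w) :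
    expVec (movedVar i α β f g) v ≤ expVec (movedVar i α β 1 1) v := by
  obtain ⟨hfj, hgj⟩ := color_lt_of_expVec_eq hα hβ hf hg fun w hw => h w (.inl hw)
  let corner : Finset (KVar K r0 r1) := {w | w.1 = v.1 ∧ w.2.1 ≤ v.2.1 ∧ w.2.2 ≤ v.2.2}
  have hv : v ∈ corner := by simp [corner]
  have hcorner : ∑ w ∈ corner, expVec (movedVar i α β f g) w ≤
      ∑ w ∈ corner, expVec (movedVar i α β 1 1) w := by
    rw [← card_filter_eq_sum_expVec, ← card_filter_eq_sum_expVec]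
    exact (card_corner_comp_le hα hβ hf hg hfj hgj v.2.1 v.2.2).1
  have hrest : ∑ w ∈ corner.erase v, expVec (movedVar i α β f g) w =
      ∑ w ∈ corner.erase v, expVec (movedVar i α β 1 1) w := by
    refine sum_congr rfl fun w hw => h w ?_
    obtain ⟨hne, hcolor, hrow, hcol⟩ := by simpa [corner] using hw
    rcases hrow.lt_or_eq with hlt | heq
    · exact .inr ⟨hcolor, .inl hlt⟩
    · refine .inr ⟨hcolor, .inr ⟨heq, hcol.lt_of_ne fun heq' => hne ?_⟩⟩
      exact Prod.ext hcolor (Prod.ext heq heq')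
  rw [← add_sum_erase _ _ hv, ← add_sum_erase _ _ hv, hrest] at hcorner
  exact Nat.le_of_add_le_add_right hcorner

end ExponentVectors

section LeadingMonomial

open Finset

variable {K r0 r1 : ℕ}

theorem varGT_iff_toLex_lt {v w : KVar K r0 r1} :
    VarGT v w ↔ toLex (v.1, toLex v.2) < toLex (w.1, toLex w.2) := by
  simp only [VarGT, Prod.Lex.toLex_lt_toLex]

theorem exists_varGT_first_ne {a b : KVar K r0 r1 →₀ ℕ} (hab : a ≠ b) :
    ∃ v, a v ≠ b v ∧ ∀ w, VarGT w v → a w = b w := by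
  obtain ⟨v₀, hv₀⟩ := DFunLike.ne_iff.1 hab
  obtain ⟨v, hv, hmin⟩ := exists_min_image (univ.filter fun v => a v ≠ b v)
    (fun v => toLex (v.1, toLex v.2)) ⟨v₀, by simpa using hv₀⟩
  refine ⟨v, (mem_filter.1 hv).2, fun w hw => ?_⟩
  by_contra hne
  exact (hmin w (by simpa using hne)).not_gt (varGT_iff_toLex_lt.1 hw)

theorem isLM_sum_monomial {X : Type*} [Fintype X] {s : X → ℤ} {a : X → KVar K r0 r1 →₀ ℕ}
    {mo : KVar K r0 r1 →₀ ℕ} (hle : ∀ x, a x = mo ∨ MonLT (a x) mo)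
    (hpos : ∀ x, a x = mo → 0 < s x) (hex : ∃ x, a x = mo) :
    IsLM (∑ x, s x • MvPolynomial.monomial (a x) (1 : ℂ)) mo := by
  have hcoeff (m' : KVar K r0 r1 →₀ ℕ) :
      MvPolynomial.coeff m' (∑ x, s x • MvPolynomial.monomial (a x) (1 : ℂ)) =
        ((∑ x with a x = m', s x : ℤ) : ℂ) := by
    simp [MvPolynomial.coeff_sum, sum_filter, ← Int.cast_smul_eq_zsmul ℂ]
  refine ⟨?_, fun m' hm' => ?_⟩
  · obtain ⟨x, hx⟩ := hex
    rw [MvPolynomial.mem_support_iff, hcoeff, Int.cast_ne_zero]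
    exact (sum_pos (fun y hy => hpos y (mem_filter.1 hy).2) ⟨x, by simpa using hx⟩).ne'
  · rw [MvPolynomial.mem_support_iff, hcoeff, Int.cast_ne_zero] at hm'
    obtain ⟨x, hx, -⟩ := exists_ne_zero_of_sum_ne_zero hm'
    exact (mem_filter.1 hx).2 ▸ hle x

end LeadingMonomial

section LinkedPairs

open Finset Equiv

/-- The index set `G⁻ × G⁺` of the sum defining `pairPoly`. -/
abbrev ColumnPerms (r0 r1 cm cp : ℕ) : Type :=
  (Fin cm → Perm (Fin r0)) × (Fin cp → Perm (Fin r1))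

variable {K r0 r1 cm cp : ℕ} (L : LinkedPair K r0 r1 cm cp)

/-- The arrow index `i` of a box labeled `(i,q)`; boxes of `T⁺` are identified with boxes of `T⁻`
by the link, under which this index is the same. -/
def boxColor (e : Fin r0 × Fin cm) : Fin K :=
  (L.Tm e.1 e.2).1

/-- The action of `α⁺` on the boxes of `T⁺`, transported to the boxes of `T⁻` by the link. -/
def boxPermP (αp : Fin cp → Perm (Fin r1)) : Perm (Fin r0 × Fin cm) :=
  L.link.symm.permCongr (prodCongrLeft αp)

theorem link_boxPermP (αp : Fin cp → Perm (Fin r1)) (e : Fin r0 × Fin cm) :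
    L.link (boxPermP L αp e) = (αp (L.link e).2 (L.link e).1, (L.link e).2) :=
  L.link.apply_symm_apply _

theorem entry_tp (q : Fin r1) (c : Fin cp) :
    entry (boxColor L) L.link (Equiv.refl _) q c = toLex (L.Tp q c) := by
  obtain ⟨e, he⟩ := L.link.surjective (q, c)
  have hlabel := L.link_label e.1 e.2
  rw [Prod.mk.eta, he] at hlabel
  simp only [entry, ← he, symm_apply_apply, refl_apply, boxColor]
  rw [← hlabel]

theorem entry_tm (p : Fin r0) (l : Fin cm) :
    entry (boxColor L) (Equiv.refl _) L.link p l = toLex (L.Tm p l) := by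
  simp [entry, boxColor, L.link_row]

/-- The exponent vector of the term of `pairPoly L` indexed by `α = (α⁻, α⁺)`. -/
noncomputable def termExp (α : ColumnPerms r0 r1 cm cp) : KVar K r0 r1 →₀ ℕ :=
  expVec (movedVar (boxColor L) L.link (Equiv.refl _) (boxPermP L α.2) (prodCongrLeft α.1))

/-- The sign of the term of `pairPoly L` indexed by `α = (α⁻, α⁺)`. -/
def termSign (α : ColumnPerms r0 r1 cm cp) : ℤ :=
  (∏ l, (Perm.sign (α.1 l) : ℤ)) * ∏ c, (Perm.sign (α.2 c) : ℤ)

theorem pairPoly_eq_sum_monomial :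
    pairPoly L = ∑ α, termSign α • MvPolynomial.monomial (termExp L α) (1 : ℂ) := by
  rw [Fintype.sum_prod_type]
  refine sum_congr rfl fun αm _ => sum_congr rfl fun αp _ => ?_
  rw [termExp, expVec, MvPolynomial.monomial_sum_one, Fintype.prod_prod_type]
  simp [termSign, movedVar, link_boxPermP, boxColor, MvPolynomial.X]

theorem termExp_one : termExp L 1 = expVec (movedVar (boxColor L) L.link (Equiv.refl _) 1 1) := by
  have hP : boxPermP L 1 = 1 := by
    ext1 e
    apply L.link.injective
    simp [link_boxPermP]
  rw [termExp, Prod.snd_one, hP]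
  rfl

theorem monExpM_eq_termExp_one : monExpM L = termExp L 1 := by
  rw [termExp_one, expVec, Fintype.sum_prod_type]
  simp [monExpM, movedVar, boxColor, L.link_row]

theorem monExpP_eq_termExp_one : monExpP L = termExp L 1 := by
  rw [termExp_one, expVec, monExpP, ← Fintype.sum_prod_type', ← Equiv.sum_comp L.link]
  refine sum_congr rfl fun e _ => ?_
  rw [L.link_label e.1 e.2]
  rfl

variable {L}

theorem termSign_eq_one {α : ColumnPerms r0 r1 cm cp}
    (h : boxPermP L α.2 = prodCongrLeft α.1) : termSign α = 1 := by
  have hsign : ∏ c, Perm.sign (α.2 c) = ∏ l, Perm.sign (α.1 l) := by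
    rw [← Perm.sign_prodCongrLeft, ← Perm.sign_prodCongrLeft, ← h, boxPermP, Perm.sign_permCongr]
  rw [termSign, ← Units.coe_prod, ← Units.coe_prod, hsign, ← Units.val_mul, Int.units_mul_self,
    Units.val_one]

theorem columnStrict_tp (hTp : ∀ c q q', q < q' → LabelLT (L.Tp q c) (L.Tp q' c)) :
    ColumnStrict (boxColor L) L.link (Equiv.refl _) := fun c q q' hlt => by
  simpa only [entry_tp, Prod.Lex.lt_iff, ofLex_toLex, LabelLT] using hTp c q q' hlt

theorem columnStrict_tm (hTm : ∀ l p p', p < p' → LabelLT (L.Tm p l) (L.Tm p' l)) :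
    ColumnStrict (boxColor L) (Equiv.refl _) L.link := fun l p p' hlt => by
  simpa only [entry_tm, Prod.Lex.lt_iff, ofLex_toLex, LabelLT] using hTm l p p' hlt

theorem termExp_eq_or_monLT (hTm : ∀ l p p', p < p' → LabelLT (L.Tm p l) (L.Tm p' l))
    (hTp : ∀ c q q', q < q' → LabelLT (L.Tp q c) (L.Tp q' c)) (α : ColumnPerms r0 r1 cm cp) :
    termExp L α = termExp L 1 ∨ MonLT (termExp L α) (termExp L 1) := by
  refine or_iff_not_imp_left.2 fun hne => ?_
  obtain ⟨v, hv, hgt⟩ := exists_varGT_first_ne hne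
  refine ⟨v, lt_of_le_of_ne ?_ hv, hgt⟩
  rw [termExp_one] at hgt ⊢
  exact expVec_movedVar_le (columnStrict_tp hTp) (columnStrict_tm hTm)
    (fun e => by rw [link_boxPermP]) (fun _ => rfl) hgt

theorem IsSemiStandardLink.boxPermP_eq (hlink : IsSemiStandardLink L)
    (hTm : ∀ l p p', p < p' → LabelLT (L.Tm p l) (L.Tm p' l))
    (hTp : ∀ c q q', q < q' → LabelLT (L.Tp q c) (L.Tp q' c))
    {α : ColumnPerms r0 r1 cm cp} (h : termExp L α = termExp L 1) :
    boxPermP L α.2 = prodCongrLeft α.1 := by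
  have hf (e : Fin r0 × Fin cm) : (L.link (boxPermP L α.2 e)).2 = (L.link e).2 := by
    rw [link_boxPermP]
  have hrow := row_eq_of_expVec_eq (columnStrict_tp hTp) (columnStrict_tm hTm) hf
    (fun _ => rfl) (h.trans (termExp_one L))
  refine perm_eq_of_row_eq (i := boxColor L) (β := Equiv.refl _) ?_ hf (fun _ => rfl)
    (fun e => (hrow e).1) (fun e => (hrow e).2.1) fun e => (hrow e).2.2
  rintro ⟨p, l⟩ ⟨p', l'⟩ hcolor hq (rfl : p = p') hlt
  refine hlink p l l' (Prod.ext hcolor ?_) hlt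
  rwa [← L.link_row, ← L.link_row]

end LinkedPairs

theorem statement9_general {K r0 r1 cm cp : ℕ} {L : LinkedPair K r0 r1 cm cp}
    (hTm : ∀ l p p', p < p' → LabelLT (L.Tm p l) (L.Tm p' l))
    (hTp : ∀ c q q', q < q' → LabelLT (L.Tp q c) (L.Tp q' c)) (hlink : IsSemiStandardLink L) :
    pairPoly L ≠ 0 ∧ monExpP L = monExpM L ∧ IsLM (pairPoly L) (monExpP L) := by
  have hLM : IsLM (pairPoly L) (monExpP L) := by
    rw [pairPoly_eq_sum_monomial, monExpP_eq_termExp_one]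
    refine isLM_sum_monomial (termExp_eq_or_monLT hTm hTp) (fun α hα => ?_) ⟨1, rfl⟩
    rw [termSign_eq_one (hlink.boxPermP_eq hTm hTp hα)]
    exact one_pos
  refine ⟨?_, (monExpP_eq_termExp_one L).trans (monExpM_eq_termExp_one L).symm, hLM⟩
  exact MvPolynomial.support_nonempty.1 ⟨_, hLM.1⟩

/-- The semi-invariant attached to a semi-standard linked
tableaux pair is nonzero, and its leading monomiaL is `Mon(T⁺) = Mon(T⁻)`. -/
theorem statement9 (K r0 r1 cm cp : ℕ) (hK : 1 ≤ K) (h0 : 1 ≤ r0) (h1 : 1 ≤ r1)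
    (L : LinkedPair K r0 r1 cm cp) (hss : IsSemiStandardPair L) :
    pairPoly L ≠ 0 ∧ monExpP L = monExpM L ∧
      IsLM (pairPoly L) (monExpP L) :=
  statement9_general hss.1.2 hss.2.1.2 hss.2.2

end QuiverSAGBI
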